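/- Theorem 2 (normal approximation of gKSS² under the Bernoulli null): there is an absolute constant C > 0 with the following property. For every N ≥ 1, every a* ∈ [0,1] and every family of symmetric functions l_1,…,l_N : {0,1}×{0,1} → ℝ with l_s(0,0) = l_s(1,1) = 1 and |l_s(0,1)| ≤ 1 for all s, if σ² := Var(T) > 0 and W := (T − E[T])/σ, then sup{ |E[f(W)] − E[f(Z)]| : f : ℝ → ℝ is 1-Lipschitz } ≤ C·( 1/(σ² N^{3/2}) + 1/(σ³ N²) ), where Z is a standard normal random variable. In particular, if additionally N·σ² ≥ c₀ for some c₀ > 0, then the Wasserstein (L¹) distance between the law of W and the standard normal law is at most C·(c₀^{−1} + c₀^{−3/2})/√N, i.e. of order N^{−1/2}. -/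

import Mathlib

open Finset
open scoped NNReal

/-- A bit regarded as a real number. -/
def bval (b : Bool) : ℝ := if b then 1 else 0

/-- Expectation with respect to `N` i.i.d. Bernoulli(a) coordinates. -/
noncomputable def berExp (N : ℕ) (a : ℝ) (g : (Fin N → Bool) → ℝ) : ℝ :=
  ∑ ω : Fin N → Bool, (∏ s : Fin N, if ω s then a else 1 - a) * g ω

/-- The squared graph kernel Stein statistic of `ER(a)` with a product kernel:
`T = (1/N²)[ Σ_{s≠s'} (a−Y_s)(a−Y_{s'})(l_s(1,Y_s)−l_s(0,Y_s))(l_{s'}(1,Y_{s'})−l_{s'}(0,Y_{s'}))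
  + Σ_s (a−Y_s)²(2 − 2 l_s(0,1)) ]`. -/
noncomputable def Tstat (N : ℕ) (a : ℝ) (l : Fin N → Bool → Bool → ℝ)
    (ω : Fin N → Bool) : ℝ :=
  (((N : ℝ)) ^ 2)⁻¹ *
    ((∑ s : Fin N, ∑ s' : Fin N,
        if s ≠ s' then
          (a - bval (ω s)) * (a - bval (ω s')) * (l s true (ω s) - l s false (ω s)) *
            (l s' true (ω s') - l s' false (ω s'))
        else 0) +
      ∑ s : Fin N, (a - bval (ω s)) ^ 2 * (2 - 2 * l s false true))

/-- The variance of `T` under the Bernoulli(a) product measure. -/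
noncomputable def varT (N : ℕ) (a : ℝ) (l : Fin N → Bool → Bool → ℝ) : ℝ :=
  berExp N a (fun ω => (Tstat N a l ω) ^ 2) - (berExp N a (Tstat N a l)) ^ 2

/-- The standardised statistic `W = (T − E[T])/σ`. -/
noncomputable def Wstat (N : ℕ) (a : ℝ) (l : Fin N → Bool → Bool → ℝ)
    (ω : Fin N → Bool) : ℝ :=
  (Tstat N a l ω - berExp N a (Tstat N a l)) / Real.sqrt (varT N a l)

/-!
Stein's method. For `h` Lipschitz, the solution `f` of `f' x - x f x = h x - E h(Z)` has a Lipschitz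
derivative: a barrier argument applied to the increments `f (· + δ) - f` gives this without
smoothing `h`. Up to a constant, `T` is a quadratic polynomial in the centred bits; let `Q`
be its standardization, with coefficient row sums at most `L`. Across one bit, `Q` is affine with
slope determined by the other bits, so a Taylor expansion bit by bit gives `E[Q f(Q)] ≈ E[τ f'(Q)]`
up to `O(N L³)`, for an explicit random `τ` with `E τ = Var Q = 1`. One bit changes `τ` by
`O(L²)`, so by the Efron–Stein inequality `E |τ - 1| = O(√N L²)`. Here `L` is of order `1/(N σ)`.
-/

section SteinEquation

open MeasureTheory ProbabilityTheory Filter Topology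

lemma hasDerivAt_gaussianPDFReal (μ : ℝ) (v : ℝ≥0) (x : ℝ) :
    HasDerivAt (gaussianPDFReal μ v) (-((x - μ) / v) * gaussianPDFReal μ v x) x := by
  have hexponent : HasDerivAt (fun y : ℝ ↦ -(y - μ) ^ 2 / (2 * v)) (-((x - μ) / v)) x := by
    refine (((((hasDerivAt_id x).sub_const μ).pow 2).neg).div_const (2 * (v : ℝ))).congr_deriv ?_
    simp only [id_eq, Nat.cast_ofNat, mul_one, Nat.add_one_sub_one, pow_one, neg_div]
    rw [mul_div_mul_left _ _ two_ne_zero]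
  refine (hexponent.exp.const_mul (√(2 * Real.pi * v))⁻¹).congr_deriv ?_
  simp only [gaussianPDFReal]
  ring

lemma tendsto_gaussianPDFReal_zero_one_cocompact :
    Tendsto (gaussianPDFReal 0 1) (cocompact ℝ) (𝓝 0) := by
  have h := (tendsto_rpow_abs_mul_exp_neg_mul_sq_cocompact (a := 1 / 2) (by norm_num) 0).const_mul
    (√(2 * Real.pi * (1 : ℝ≥0)))⁻¹
  rw [mul_zero] at h
  refine h.congr fun x ↦ ?_
  simp only [gaussianPDFReal, Real.rpow_zero, NNReal.coe_one]
  ring_nf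

lemma nonpos_of_mul_self_le_hasDerivAt {D D' : ℝ → ℝ} {c : ℝ}
    (hD : ∀ x, c ≤ x → HasDerivAt D (D' x) x) (hle : ∀ x, c ≤ x → x * D x ≤ D' x)
    (hlim : Tendsto (fun x ↦ gaussianPDFReal 0 1 x * D x) atTop (𝓝 0)) {x : ℝ} (hx : c ≤ x) :
    D x ≤ 0 := by
  have hderiv : ∀ y, c ≤ y → HasDerivAt (fun y ↦ gaussianPDFReal 0 1 y * D y)
      (gaussianPDFReal 0 1 y * (D' y - y * D y)) y := fun y hy ↦ by
    refine ((hasDerivAt_gaussianPDFReal 0 1 y).mul (hD y hy)).congr_deriv ?_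
    simp only [sub_zero, NNReal.coe_one, div_one]
    ring
  have hmono : MonotoneOn (fun y ↦ gaussianPDFReal 0 1 y * D y) (Set.Ici c) :=
    monotoneOn_of_hasDerivWithinAt_nonneg (convex_Ici c)
      (fun y hy ↦ (hderiv y hy).continuousAt.continuousWithinAt)
      (fun y hy ↦ (hderiv y (interior_subset hy)).hasDerivWithinAt)
      (fun y hy ↦ mul_nonneg (gaussianPDFReal_nonneg 0 1 y)
        (sub_nonneg.2 (hle y (interior_subset hy))))
  have hweighted : gaussianPDFReal 0 1 x * D x ≤ 0 := ge_of_tendsto hlim <| by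
    filter_upwards [eventually_ge_atTop x] with y hy
    exact hmono hx (hx.trans hy) hy
  exact nonpos_of_mul_nonpos_right hweighted (gaussianPDFReal_pos 0 1 x one_ne_zero)

section Barrier

variable {u r : ℝ → ℝ} {p q : ℝ}

-- `p + 2 * q / (1 + x)` is a supersolution of the equation on the half-line.
lemma le_of_hasDerivAt_mul_self_add (hq : 0 ≤ q) (hu : ∀ x, HasDerivAt u (x * u x + r x) x)
    (hr : ∀ x, 0 ≤ x → -(p * x + q) ≤ r x)
    (hlim : Tendsto (fun x ↦ gaussianPDFReal 0 1 x * u x) atTop (𝓝 0)) {x : ℝ} (hx : 0 ≤ x) :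
    u x ≤ p + 2 * q / (1 + x) := by
  have hbarrier : ∀ y : ℝ, 0 ≤ y →
      HasDerivAt (fun y ↦ p + 2 * q / (1 + y)) (-(2 * q) / (1 + y) ^ 2) y := fun y hy ↦ by
    refine (((hasDerivAt_const y (2 * q)).div ((hasDerivAt_id y).const_add 1)
      (by simp only [id_eq]; positivity)).const_add p).congr_deriv ?_
    simp
  have hbarrier_lim : Tendsto (fun y : ℝ ↦ p + 2 * q / (1 + y)) atTop (𝓝 (p + 0)) :=
    ((tendsto_atTop_add_const_left _ 1 tendsto_id).const_div_atTop (2 * q)).const_add p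
  refine sub_nonpos.1 <| nonpos_of_mul_self_le_hasDerivAt (c := 0)
    (D := fun y ↦ u y - (p + 2 * q / (1 + y))) (fun y hy ↦ (hu y).sub (hbarrier y hy))
    (fun y hy ↦ ?_) ?_ hx
  · have hsuper : q ≤ 2 * q * y / (1 + y) + 2 * q / (1 + y) ^ 2 := by
      rw [← sub_nonneg]
      have heq : 2 * q * y / (1 + y) + 2 * q / (1 + y) ^ 2 - q = q * (1 + y ^ 2) / (1 + y) ^ 2 := by
        field_simp
        ring
      rw [heq]
      positivity
    calc y * (u y - (p + 2 * q / (1 + y)))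
        = y * u y - p * y - 2 * q * y / (1 + y) := by ring
      _ ≤ y * u y + r y - -(2 * q) / (1 + y) ^ 2 := by
        rw [neg_div]
        linarith [hr y hy]
  · have hφ := tendsto_gaussianPDFReal_zero_one_cocompact.mono_left atTop_le_cocompact
    simpa only [mul_sub, zero_mul, sub_zero] using hlim.sub (hφ.mul hbarrier_lim)

lemma abs_le_of_hasDerivAt_mul_self_add (hu : ∀ x, HasDerivAt u (x * u x + r x) x)
    (hr : ∀ x, |r x| ≤ p * |x| + q)
    (hlim : Tendsto (fun x ↦ gaussianPDFReal 0 1 x * u x) (cocompact ℝ) (𝓝 0)) (x : ℝ) :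
    |u x| ≤ p + 2 * q / (1 + |x|) := by
  have hq : 0 ≤ q := (abs_nonneg (r 0)).trans (by simpa using hr 0)
  have half_line : ∀ {v s : ℝ → ℝ}, (∀ x, HasDerivAt v (x * v x + s x) x) →
      (∀ x, |s x| ≤ p * |x| + q) →
      Tendsto (fun x ↦ gaussianPDFReal 0 1 x * v x) (cocompact ℝ) (𝓝 0) →
      ∀ y, 0 ≤ y → |v y| ≤ p + 2 * q / (1 + |y|) := by
    intro v s hv hs hvlim y hy
    have hvlim' := hvlim.mono_left atTop_le_cocompact
    have hs' : ∀ z, 0 ≤ z → |s z| ≤ p * z + q := fun z hz ↦ by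
      simpa only [abs_of_nonneg hz] using hs z
    rw [abs_of_nonneg hy, abs_le']
    refine ⟨le_of_hasDerivAt_mul_self_add hq hv (fun z hz ↦ (abs_le.1 (hs' z hz)).1) hvlim' hy,
      le_of_hasDerivAt_mul_self_add (u := fun z ↦ -v z) (r := fun z ↦ -s z) hq
        (fun z ↦ (hv z).neg.congr_deriv (by ring))
        (fun z hz ↦ neg_le_neg (abs_le.1 (hs' z hz)).2) ?_ hy⟩
    simpa only [mul_neg, neg_zero] using hvlim'.neg
  rcases le_total 0 x with hx | hx
  · exact half_line hu hr hlim x hx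
  · have hreflected := half_line (v := fun y ↦ u (-y)) (s := fun y ↦ -r (-y))
      (fun y ↦ ((hu (-y)).comp y (hasDerivAt_neg y)).congr_deriv (by ring))
      (fun y ↦ by simpa only [abs_neg] using hr (-y))
      ((hlim.comp (Homeomorph.neg ℝ).isClosedEmbedding.tendsto_cocompact).congr fun y ↦ by
        simp [gaussianPDFReal])
      (-x) (neg_nonneg.2 hx)
    simpa only [neg_neg, abs_neg] using hreflected

end Barrier

lemma integrable_of_lipschitzWith {μ : Measure ℝ} [IsFiniteMeasure μ] (hμ : Integrable id μ)
    {K : ℝ≥0} {h : ℝ → ℝ} (hh : LipschitzWith K h) : Integrable h μ := by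
  refine ((integrable_const ‖h 0‖).add (hμ.norm.const_mul K)).mono'
    hh.continuous.aestronglyMeasurable (.of_forall fun x ↦ ?_)
  have hdist := hh.norm_sub_le x 0
  rw [sub_zero] at hdist
  simp only [Pi.add_apply, id_eq]
  linarith [norm_le_insert' (h x) (h 0)]

lemma abs_sub_integral_le_of_lipschitzWith {μ : Measure ℝ} [IsProbabilityMeasure μ]
    (hμ : Integrable id μ) {K : ℝ≥0} {h : ℝ → ℝ} (hh : LipschitzWith K h) (x : ℝ) :
    |h x - ∫ z, h z ∂μ| ≤ K * (|x| + ∫ z, |z| ∂μ) := by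
  have hint := integrable_of_lipschitzWith hμ hh
  have habs : Integrable (fun z : ℝ ↦ |z|) μ := hμ.abs
  calc |h x - ∫ z, h z ∂μ| = |∫ z, (h x - h z) ∂μ| := by
        simp [integral_sub (integrable_const _) hint]
    _ ≤ ∫ z, |h x - h z| ∂μ := abs_integral_le_integral_abs
    _ ≤ ∫ z, K * (|x| + |z|) ∂μ := by
        refine integral_mono ((integrable_const _).sub hint).abs
          (((integrable_const _).add habs).const_mul _) fun z ↦ ?_
        exact (hh.dist_le_mul x z).trans (by
          rw [Real.dist_eq]
          gcongr
          exact abs_sub x z)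
    _ = K * (|x| + ∫ z, |z| ∂μ) := by
        simp [integral_const_mul, integral_add (integrable_const _) habs]

lemma integral_abs_gaussianReal_le (v : ℝ≥0) : ∫ z, |z| ∂(gaussianReal 0 v) ≤ √v := by
  have hid : MemLp (fun z : ℝ ↦ z) 2 (gaussianReal 0 v) := memLp_id_gaussianReal 2
  have hsq : ∫ z, z ^ 2 ∂(gaussianReal 0 v) = v := by
    simpa [variance_fun_id_gaussianReal] using (variance_eq_sub hid).symm
  have hvar := variance_eq_sub hid.abs
  simp only [Pi.pow_apply, Pi.abs_apply, sq_abs, hsq] at hvar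
  apply Real.le_sqrt_of_sq_le
  exact sub_nonneg.1 (hvar ▸ variance_nonneg _ _)

lemma integrable_gaussianPDFReal_mul {μ : ℝ} {v : ℝ≥0} (hv : v ≠ 0) {g : ℝ → ℝ}
    (hg : Integrable g (gaussianReal μ v)) : Integrable (fun x ↦ gaussianPDFReal μ v x * g x) := by
  rw [gaussianReal_of_var_ne_zero _ hv, integrable_withDensity_iff_integrable_smul'
    (measurable_gaussianPDF _ _) (.of_forall fun _ ↦ gaussianPDF_lt_top)] at hg
  simpa only [toReal_gaussianPDF, smul_eq_mul] using hg

section PrimitiveOnIic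

variable {k : ℝ → ℝ}

lemma hasDerivAt_integral_Iic (hk : Integrable k) (hkc : Continuous k) (x : ℝ) :
    HasDerivAt (fun y ↦ ∫ t in Set.Iic y, k t) (k x) x := by
  have hsplit : (fun y ↦ ∫ t in Set.Iic y, k t) =
      fun y ↦ (∫ t in Set.Iic 0, k t) + ∫ t in (0 : ℝ)..y, k t := by
    funext y
    rw [← intervalIntegral.integral_Iic_sub_Iic hk.integrableOn hk.integrableOn,
      add_sub_cancel]
  rw [hsplit]
  exact (intervalIntegral.integral_hasDerivAt_right (hkc.intervalIntegrable _ _)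
    hkc.aestronglyMeasurable.stronglyMeasurableAtFilter hkc.continuousAt).const_add _

lemma tendsto_integral_Iic_cocompact_of_integral_eq_zero (hk : Integrable k)
    (hzero : ∫ t, k t = 0) : Tendsto (fun x ↦ ∫ t in Set.Iic x, k t) (cocompact ℝ) (𝓝 0) := by
  rw [cocompact_eq_atBot_atTop, tendsto_sup]
  refine ⟨tendsto_integral_Iic_zero tendsto_id, ?_⟩
  rw [← hzero]
  exact (aecover_Iic tendsto_id).integral_tendsto_of_countably_generated hk

end PrimitiveOnIic

/-- The solution `f` of Stein's equation `f' x - x * f x = h x - ∫ h dγ` for the standard normal law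
`γ` that stays bounded when `h` is Lipschitz. -/
noncomputable def steinSolution (h : ℝ → ℝ) (x : ℝ) : ℝ :=
  (gaussianPDFReal 0 1 x)⁻¹ *
    ∫ t in Set.Iic x, gaussianPDFReal 0 1 t * (h t - ∫ z, h z ∂(gaussianReal 0 1))

section SteinSolution

variable {K : ℝ≥0} {h : ℝ → ℝ}

lemma integrable_gaussianReal_of_lipschitzWith (hh : LipschitzWith K h) (μ : ℝ) (v : ℝ≥0) :
    Integrable h (gaussianReal μ v) :=
  integrable_of_lipschitzWith (memLp_one_iff_integrable.1 (memLp_id_gaussianReal 1)) hh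

lemma integrable_gaussianPDFReal_mul_sub_integral (hh : LipschitzWith K h) :
    Integrable fun t ↦ gaussianPDFReal 0 1 t * (h t - ∫ z, h z ∂(gaussianReal 0 1)) :=
  integrable_gaussianPDFReal_mul one_ne_zero
    ((integrable_gaussianReal_of_lipschitzWith hh 0 1).sub (integrable_const _))

lemma hasDerivAt_steinSolution (hh : LipschitzWith K h) (x : ℝ) :
    HasDerivAt (steinSolution h)
      (x * steinSolution h x + (h x - ∫ z, h z ∂(gaussianReal 0 1))) x := by
  have hφ := (gaussianPDFReal_pos 0 1 x one_ne_zero).ne'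
  have hφ_cont : Continuous (gaussianPDFReal 0 1) :=
    continuous_iff_continuousAt.2 fun y ↦ (hasDerivAt_gaussianPDFReal 0 1 y).continuousAt
  refine (((hasDerivAt_gaussianPDFReal 0 1 x).inv hφ).mul (hasDerivAt_integral_Iic
    (integrable_gaussianPDFReal_mul_sub_integral hh)
    (hφ_cont.mul (hh.continuous.sub continuous_const)) x)).congr_deriv ?_
  simp only [steinSolution, NNReal.coe_one, sub_zero, div_one, Pi.inv_apply]
  field_simp

lemma tendsto_gaussianPDFReal_mul_steinSolution (hh : LipschitzWith K h) :
    Tendsto (fun x ↦ gaussianPDFReal 0 1 x * steinSolution h x) (cocompact ℝ) (𝓝 0) := by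
  have hcentred : ∫ t, gaussianPDFReal 0 1 t * (h t - ∫ z, h z ∂(gaussianReal 0 1)) = 0 := by
    simp only [← smul_eq_mul, ← integral_gaussianReal_eq_integral_smul one_ne_zero]
    simp [integral_sub (integrable_gaussianReal_of_lipschitzWith hh 0 1) (integrable_const _)]
  refine (tendsto_integral_Iic_cocompact_of_integral_eq_zero
    (integrable_gaussianPDFReal_mul_sub_integral hh) hcentred).congr fun x ↦ ?_
  rw [steinSolution, mul_inv_cancel_left₀ (gaussianPDFReal_pos 0 1 x one_ne_zero).ne']

lemma abs_sub_integral_gaussianReal_le (hh : LipschitzWith K h) (x : ℝ) :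
    |h x - ∫ z, h z ∂(gaussianReal 0 1)| ≤ K * |x| + K := by
  refine (abs_sub_integral_le_of_lipschitzWith
    (memLp_one_iff_integrable.1 (memLp_id_gaussianReal 1)) hh x).trans ?_
  rw [mul_add]
  gcongr
  exact mul_le_of_le_one_right K.2
    ((integral_abs_gaussianReal_le 1).trans_eq (by simp only [NNReal.coe_one, Real.sqrt_one]))

lemma abs_steinSolution_le (hh : LipschitzWith K h) (x : ℝ) : |steinSolution h x| ≤ 3 * K := by
  have hbarrier := abs_le_of_hasDerivAt_mul_self_add (hasDerivAt_steinSolution hh)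
    (abs_sub_integral_gaussianReal_le hh) (tendsto_gaussianPDFReal_mul_steinSolution hh) x
  have hdecay : 2 * (K : ℝ) / (1 + |x|) ≤ 2 * K :=
    div_le_self (by positivity) (le_add_of_nonneg_right (abs_nonneg x))
  linarith

-- The increment solves the same equation with a remainder that is small and no longer grows, so
-- the regularity of the solution follows without differentiating `h`.
lemma hasDerivAt_steinSolution_increment (hh : LipschitzWith K h) (δ x : ℝ) :
    HasDerivAt (fun y ↦ steinSolution h (y + δ) - steinSolution h y)
      (x * (steinSolution h (x + δ) - steinSolution h x) +
        (δ * steinSolution h (x + δ) + (h (x + δ) - h x))) x :=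
  (((hasDerivAt_steinSolution hh (x + δ)).comp_add_const x δ).sub
    (hasDerivAt_steinSolution hh x)).congr_deriv (by ring)

lemma abs_steinSolution_increment_remainder_le (hh : LipschitzWith K h) (δ x : ℝ) :
    |δ * steinSolution h (x + δ) + (h (x + δ) - h x)| ≤ 4 * K * |δ| :=
  calc |δ * steinSolution h (x + δ) + (h (x + δ) - h x)|
      ≤ |δ| * |steinSolution h (x + δ)| + |h (x + δ) - h x| := by
        rw [← abs_mul]
        exact abs_add_le _ _
    _ ≤ |δ| * (3 * K) + K * |δ| := by
        gcongr
        · exact abs_steinSolution_le hh _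
        · simpa only [Real.dist_eq, add_sub_cancel_left] using hh.dist_le_mul (x + δ) x
    _ = 4 * K * |δ| := by ring

lemma abs_steinSolution_increment_le (hh : LipschitzWith K h) (δ x : ℝ) :
    |steinSolution h (x + δ) - steinSolution h x| ≤ 8 * K * |δ| / (1 + |x|) := by
  have hlim : Tendsto
      (fun y ↦ gaussianPDFReal 0 1 y * (steinSolution h (y + δ) - steinSolution h y))
      (cocompact ℝ) (𝓝 0) := by
    refine tendsto_gaussianPDFReal_zero_one_cocompact.zero_mul_isBoundedUnder_le
      (isBoundedUnder_of ⟨6 * K, fun y ↦ ?_⟩)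
    exact (abs_sub _ _).trans
      (by linarith [abs_steinSolution_le hh (y + δ), abs_steinSolution_le hh y])
  refine (abs_le_of_hasDerivAt_mul_self_add (p := 0) (q := 4 * K * |δ|)
    (hasDerivAt_steinSolution_increment hh δ) (fun y ↦ ?_) hlim x).trans_eq (by ring)
  simpa only [zero_mul, zero_add] using abs_steinSolution_increment_remainder_le hh δ y

lemma lipschitzWith_steinSolution (hh : LipschitzWith K h) :
    LipschitzWith (8 * K) (steinSolution h) := by
  refine LipschitzWith.of_dist_le_mul fun y x ↦ ?_
  have hincrement := abs_steinSolution_increment_le hh (y - x) x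
  rw [add_sub_cancel] at hincrement
  exact hincrement.trans
    (div_le_self (by positivity) (le_add_of_nonneg_right (abs_nonneg x)))

lemma abs_deriv_steinSolution_le (hh : LipschitzWith K h) (x : ℝ) :
    |deriv (steinSolution h) x| ≤ 8 * K :=
  norm_deriv_le_of_lipschitz (lipschitzWith_steinSolution hh)

lemma deriv_steinSolution (hh : LipschitzWith K h) (x : ℝ) :
    deriv (steinSolution h) x = x * steinSolution h x + (h x - ∫ z, h z ∂(gaussianReal 0 1)) :=
  (hasDerivAt_steinSolution hh x).deriv

lemma lipschitzWith_deriv_steinSolution (hh : LipschitzWith K h) :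
    LipschitzWith (12 * K) (deriv (steinSolution h)) := by
  refine LipschitzWith.of_dist_le_mul fun y x ↦ ?_
  obtain ⟨δ, rfl⟩ : ∃ δ, y = x + δ := ⟨y - x, (add_sub_cancel x y).symm⟩
  have hincrement : |x| * |steinSolution h (x + δ) - steinSolution h x| ≤ 8 * K * |δ| := by
    calc |x| * |steinSolution h (x + δ) - steinSolution h x|
        ≤ (1 + |x|) * (8 * K * |δ| / (1 + |x|)) := by
          gcongr
          · linarith
          · exact abs_steinSolution_increment_le hh δ x
      _ = 8 * K * |δ| := mul_div_cancel₀ _ (by positivity)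
  calc |deriv (steinSolution h) (x + δ) - deriv (steinSolution h) x|
      = |x * (steinSolution h (x + δ) - steinSolution h x) +
          (δ * steinSolution h (x + δ) + (h (x + δ) - h x))| := by
        rw [deriv_steinSolution hh, deriv_steinSolution hh]
        ring_nf
    _ ≤ |x| * |steinSolution h (x + δ) - steinSolution h x| +
          |δ * steinSolution h (x + δ) + (h (x + δ) - h x)| := by
        rw [← abs_mul]
        exact abs_add_le _ _
    _ ≤ 8 * K * |δ| + 4 * K * |δ| :=
        add_le_add hincrement (abs_steinSolution_increment_remainder_le hh δ x)
    _ = (12 * K : ℝ≥0) * dist (x + δ) x := by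
        rw [Real.dist_eq, add_sub_cancel_left]
        push_cast
        ring

end SteinSolution

lemma abs_sub_sub_deriv_mul_le {f : ℝ → ℝ} {C : ℝ≥0} (hf : Differentiable ℝ f)
    (hf' : LipschitzWith C (deriv f)) (x y : ℝ) :
    |f y - f x - deriv f x * (y - x)| ≤ C * (y - x) ^ 2 := by
  have hderiv : ∀ z ∈ Set.uIcc x y, HasDerivWithinAt (fun z ↦ f z - deriv f x * z)
      (deriv f z - deriv f x) (Set.uIcc x y) z := fun z _ ↦
    ((hf z).hasDerivAt.sub ((hasDerivAt_id z).const_mul _)).hasDerivWithinAt.congr_deriv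
      (by rw [mul_one])
  have hbound : ∀ z ∈ Set.uIcc x y, ‖deriv f z - deriv f x‖ ≤ C * |y - x| := fun z hz ↦
    (hf'.dist_le_mul z x).trans (by
      gcongr
      exact Set.abs_sub_left_of_mem_uIcc hz)
  calc |f y - f x - deriv f x * (y - x)|
      = ‖(f y - deriv f x * y) - (f x - deriv f x * x)‖ := by
        rw [Real.norm_eq_abs]
        ring_nf
    _ ≤ C * |y - x| * ‖y - x‖ := Convex.norm_image_sub_le_of_norm_hasDerivWithin_le hderiv hbound
        (convex_uIcc x y) Set.left_mem_uIcc Set.right_mem_uIcc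
    _ = C * (y - x) ^ 2 := by rw [Real.norm_eq_abs, mul_assoc, abs_mul_abs_self, sq]

end SteinEquation

section BernoulliExpectation

variable {N : ℕ} {a : ℝ} {g k : (Fin N → Bool) → ℝ}

lemma berExp_add (g k : (Fin N → Bool) → ℝ) :
    berExp N a (fun ω ↦ g ω + k ω) = berExp N a g + berExp N a k := by
  simp only [berExp, mul_add, sum_add_distrib]

lemma berExp_sub (g k : (Fin N → Bool) → ℝ) :
    berExp N a (fun ω ↦ g ω - k ω) = berExp N a g - berExp N a k := by
  simp only [berExp, mul_sub, sum_sub_distrib]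

lemma berExp_const_mul (c : ℝ) (g : (Fin N → Bool) → ℝ) :
    berExp N a (fun ω ↦ c * g ω) = c * berExp N a g := by
  simp only [berExp, mul_sum, mul_left_comm]

lemma berExp_sum {ι : Type*} (S : Finset ι) (g : ι → (Fin N → Bool) → ℝ) :
    berExp N a (fun ω ↦ ∑ i ∈ S, g i ω) = ∑ i ∈ S, berExp N a (g i) := by
  simp only [berExp, mul_sum]
  exact sum_comm

lemma berExp_insertNth (s : Fin (N + 1)) (g : (Fin (N + 1) → Bool) → ℝ) :
    berExp (N + 1) a g = a * berExp N a (fun ω ↦ g (s.insertNth true ω)) +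
      (1 - a) * berExp N a (fun ω ↦ g (s.insertNth false ω)) := by
  unfold berExp
  rw [← (Fin.insertNthEquiv (fun _ ↦ Bool) s).sum_comp, Fintype.sum_prod_type]
  simp only [Fintype.sum_bool, mul_sum, Fin.prod_univ_succAbove _ s]
  simp [Fin.insertNthEquiv, mul_assoc]

lemma berExp_const (c : ℝ) : berExp N a (fun _ ↦ c) = c := by
  induction N with
  | zero => simp [berExp]
  | succ N ih =>
    rw [berExp_insertNth 0, ih]
    ring

lemma berExp_resample (s : Fin N) (g : (Fin N → Bool) → ℝ) :
    berExp N a g = berExp N a (fun ω ↦ a * g (Function.update ω s true) +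
      (1 - a) * g (Function.update ω s false)) := by
  cases N with
  | zero => exact s.elim0
  | succ N =>
    rw [berExp_insertNth s, berExp_insertNth s]
    simp only [Fin.update_insertNth, berExp_add, berExp_const_mul]
    ring

section UnitInterval

variable (ha : a ∈ Set.Icc (0 : ℝ) 1)
include ha

lemma berExp_mono (h : ∀ ω, g ω ≤ k ω) : berExp N a g ≤ berExp N a k := by
  refine sum_le_sum fun ω _ ↦ mul_le_mul_of_nonneg_left (h ω) (prod_nonneg fun s _ ↦ ?_)
  split_ifs
  exacts [ha.1, sub_nonneg.2 ha.2]

lemma abs_berExp_le (g : (Fin N → Bool) → ℝ) : |berExp N a g| ≤ berExp N a (fun ω ↦ |g ω|) := by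
  have hneg : berExp N a (fun ω ↦ -1 * g ω) ≤ berExp N a (fun ω ↦ |g ω|) :=
    berExp_mono ha fun ω ↦ by simpa only [neg_one_mul] using neg_le_abs (g ω)
  rw [berExp_const_mul, neg_one_mul] at hneg
  exact abs_le'.2 ⟨berExp_mono ha fun ω ↦ le_abs_self (g ω), hneg⟩

lemma abs_berExp_le_of_forall_abs_le {c : ℝ} (h : ∀ ω, |g ω| ≤ c) : |berExp N a g| ≤ c :=
  (abs_berExp_le ha g).trans ((berExp_mono ha h).trans_eq (berExp_const c))

end UnitInterval

lemma berExp_sub_berExp_sq (g : (Fin N → Bool) → ℝ) :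
    berExp N a (fun ω ↦ (g ω - berExp N a g) ^ 2) =
      berExp N a (fun ω ↦ g ω ^ 2) - berExp N a g ^ 2 := by
  have hexpand : (fun ω ↦ (g ω - berExp N a g) ^ 2) =
      fun ω ↦ (g ω ^ 2 - 2 * berExp N a g * g ω) + berExp N a g ^ 2 := by
    funext ω
    ring
  rw [hexpand, berExp_add, berExp_sub, berExp_const_mul, berExp_const]
  ring

lemma sq_berExp_le (ha : a ∈ Set.Icc (0 : ℝ) 1) (g : (Fin N → Bool) → ℝ) :
    berExp N a g ^ 2 ≤ berExp N a (fun ω ↦ g ω ^ 2) := by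
  have hvar : berExp N a (fun _ ↦ 0) ≤ berExp N a (fun ω ↦ (g ω - berExp N a g) ^ 2) :=
    berExp_mono ha fun ω ↦ sq_nonneg _
  rw [berExp_const, berExp_sub_berExp_sq] at hvar
  exact sub_nonneg.1 hvar

lemma efron_stein_of_bounded_differences (ha : a ∈ Set.Icc (0 : ℝ) 1) {c : Fin N → ℝ}
    (hg : ∀ ω s b, |g (Function.update ω s b) - g ω| ≤ c s) :
    berExp N a (fun ω ↦ g ω ^ 2) - berExp N a g ^ 2 ≤ a * (1 - a) * ∑ s, c s ^ 2 := by
  induction N with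
  | zero => simp [berExp]
  | succ N ih =>
    have hslice : ∀ b₀, berExp N a (fun ω ↦ g ((0 : Fin (N + 1)).insertNth b₀ ω) ^ 2) -
        berExp N a (fun ω ↦ g ((0 : Fin (N + 1)).insertNth b₀ ω)) ^ 2 ≤
          a * (1 - a) * ∑ s : Fin N, c s.succ ^ 2 := fun b₀ ↦
      ih fun ω s b ↦ by
        rw [Fin.insertNth_update]
        exact hg _ _ _
    have hgap : |berExp N a (fun ω ↦ g ((0 : Fin (N + 1)).insertNth true ω)) -
        berExp N a (fun ω ↦ g ((0 : Fin (N + 1)).insertNth false ω))| ≤ c 0 := by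
      rw [← berExp_sub]
      refine abs_berExp_le_of_forall_abs_le ha fun ω ↦ ?_
      simpa only [Fin.update_insertNth] using hg ((0 : Fin (N + 1)).insertNth false ω) 0 true
    rw [berExp_insertNth 0, berExp_insertNth 0, Fin.sum_univ_succ]
    set x := berExp N a (fun ω ↦ g ((0 : Fin (N + 1)).insertNth true ω))
    set y := berExp N a (fun ω ↦ g ((0 : Fin (N + 1)).insertNth false ω))
    obtain ⟨ha₀, ha₁⟩ : 0 ≤ a ∧ 0 ≤ 1 - a := ⟨ha.1, sub_nonneg.2 ha.2⟩
    linear_combination a * hslice true + (1 - a) * hslice false +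
      a * (1 - a) * sq_le_sq' (abs_le.1 hgap).1 (abs_le.1 hgap).2

lemma berExp_abs_sub_berExp_le (ha : a ∈ Set.Icc (0 : ℝ) 1) {c : Fin N → ℝ}
    (hg : ∀ ω s b, |g (Function.update ω s b) - g ω| ≤ c s) :
    berExp N a (fun ω ↦ |g ω - berExp N a g|) ≤ √(a * (1 - a) * ∑ s, c s ^ 2) := by
  refine Real.le_sqrt_of_sq_le ((sq_berExp_le ha _).trans ?_)
  simp only [sq_abs, berExp_sub_berExp_sq]
  exact efron_stein_of_bounded_differences ha hg

end BernoulliExpectation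

section SteinInequality

variable {N : ℕ} {a : ℝ}

-- Conditionally on the other bits, the increment of `F ∘ Q` across bit `s` is compared with its
-- derivative at both end points; the weights `1 - a` and `a` are the probabilities of the two bits.
lemma abs_berExp_integration_by_parts_le (ha : a ∈ Set.Icc (0 : ℝ) 1) (s : Fin N)
    {Q B D : (Fin N → Bool) → ℝ} {F F' : ℝ → ℝ} {C : ℝ≥0} {L : ℝ}
    (hQ : ∀ ω b, Q (Function.update ω s b) = Q ω + (bval b - bval (ω s)) * D ω)
    (hB : ∀ ω b, B (Function.update ω s b) = B ω) (hD : ∀ ω b, D (Function.update ω s b) = D ω)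
    (hBL : ∀ ω, |B ω| ≤ L) (hDL : ∀ ω, |D ω| ≤ L)
    (hF : ∀ x y, |F y - F x - F' x * (y - x)| ≤ C * (y - x) ^ 2) :
    |berExp N a (fun ω ↦ (bval (ω s) - a) * (B ω * F (Q ω)) -
      (bval (ω s) - a) ^ 2 * (B ω * D ω) * F' (Q ω))| ≤ a * (1 - a) * (C * L ^ 3) := by
  rw [berExp_resample s]
  refine abs_berExp_le_of_forall_abs_le ha fun ω ↦ ?_
  obtain ⟨ha₀, ha₁⟩ : 0 ≤ a ∧ 0 ≤ 1 - a := ⟨ha.1, sub_nonneg.2 ha.2⟩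
  set q := Q (Function.update ω s false)
  have hq_true : Q (Function.update ω s true) = q + D ω := by
    simp only [q, hQ, bval, if_true, Bool.false_eq_true, if_false]
    ring
  have hDL' : C * D ω ^ 2 ≤ C * L ^ 2 :=
    mul_le_mul_of_nonneg_left (sq_le_sq' (abs_le.1 (hDL ω)).1 (abs_le.1 (hDL ω)).2) C.2
  have hleft : |F (q + D ω) - F q - F' q * D ω| ≤ C * L ^ 2 := by
    simpa only [add_sub_cancel_left] using (hF q (q + D ω)).trans
      (by rwa [add_sub_cancel_left])
  have hright : |F (q + D ω) - F q - F' (q + D ω) * D ω| ≤ C * L ^ 2 := by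
    refine (le_of_eq ?_).trans ((hF (q + D ω) q).trans (by rwa [sub_add_cancel_left, neg_sq]))
    rw [sub_add_cancel_left, ← abs_neg]
    ring_nf
  calc _ = |a * (1 - a) * (B ω * ((1 - a) * (F (q + D ω) - F q - F' (q + D ω) * D ω) +
        a * (F (q + D ω) - F q - F' q * D ω)))| := by
        simp only [hB, hD, hq_true, Function.update_self, bval, if_true, Bool.false_eq_true,
          if_false]
        ring_nf
    _ ≤ a * (1 - a) * (L * ((1 - a) * (C * L ^ 2) + a * (C * L ^ 2))) := by
        rw [abs_mul, abs_mul (B ω), abs_of_nonneg (mul_nonneg ha₀ ha₁)]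
        gcongr
        · exact (abs_nonneg _).trans (hBL ω)
        · exact hBL ω
        · refine (abs_add_le _ _).trans ?_
          rw [abs_mul, abs_mul, abs_of_nonneg ha₀, abs_of_nonneg ha₁]
          gcongr
    _ = a * (1 - a) * (C * L ^ 3) := by ring

lemma abs_berExp_sub_integral_gaussianReal_le (ha : a ∈ Set.Icc (0 : ℝ) 1) {K : ℝ≥0} {h : ℝ → ℝ}
    (hh : LipschitzWith K h) (T τ : (Fin N → Bool) → ℝ) :
    |berExp N a (fun ω ↦ h (T ω)) - ∫ z, h z ∂(ProbabilityTheory.gaussianReal 0 1)| ≤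
      |berExp N a (fun ω ↦ T ω * steinSolution h (T ω) - τ ω * deriv (steinSolution h) (T ω))| +
        8 * K * berExp N a (fun ω ↦ |τ ω - 1|) := by
  set f := steinSolution h
  have hstein : berExp N a (fun ω ↦ h (T ω)) - ∫ z, h z ∂(ProbabilityTheory.gaussianReal 0 1) =
      -(berExp N a (fun ω ↦ T ω * f (T ω) - τ ω * deriv f (T ω)) +
        berExp N a (fun ω ↦ (τ ω - 1) * deriv f (T ω))) := by
    rw [← berExp_const (a := a) (N := N) (∫ z, h z ∂_), ← berExp_sub, ← berExp_add,
      ← neg_one_mul, ← berExp_const_mul]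
    congr 1 with ω
    rw [deriv_steinSolution hh]
    ring
  rw [hstein, abs_neg]
  refine (abs_add_le _ _).trans (add_le_add_right ((abs_berExp_le ha _).trans ?_) _)
  rw [← berExp_const_mul]
  refine berExp_mono ha fun ω ↦ ?_
  rw [abs_mul, mul_comm]
  gcongr
  exact abs_deriv_steinSolution_le hh _

end SteinInequality

section QuadraticStatistic

open scoped Matrix

variable {N : ℕ} {a : ℝ} {α : Fin N → ℝ} {β : Matrix (Fin N) (Fin N) ℝ} {L : ℝ}

/-- The vector of centred bits `ξ s = Y s - a`. -/
def centeredBits (a : ℝ) (ω : Fin N → Bool) : Fin N → ℝ := fun s ↦ bval (ω s) - a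

/-- The affine function `α + β ξ` of the centred bits `ξ`. When `β` is symmetric with zero diagonal,
`linearFactor a α ((2 : ℝ) • β)` is the gradient of `quadraticStat a α β`. -/
def linearFactor (a : ℝ) (α : Fin N → ℝ) (β : Matrix (Fin N) (Fin N) ℝ) (ω : Fin N → Bool) :
    Fin N → ℝ :=
  α + β *ᵥ centeredBits a ω

/-- The quadratic statistic `⟨ξ, α + β ξ⟩` of the centred bits `ξ`. -/
def quadraticStat (a : ℝ) (α : Fin N → ℝ) (β : Matrix (Fin N) (Fin N) ℝ) (ω : Fin N → Bool) : ℝ :=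
  centeredBits a ω ⬝ᵥ linearFactor a α β ω

/-- The Stein coefficient `τ` of `Q = quadraticStat a α β`, for which `E[Q F(Q)] ≈ E[τ F'(Q)]`. -/
def steinCoeff (a : ℝ) (α : Fin N → ℝ) (β : Matrix (Fin N) (Fin N) ℝ) (ω : Fin N → Bool) : ℝ :=
  ∑ s, centeredBits a ω s ^ 2 * (linearFactor a α β ω s * linearFactor a α ((2 : ℝ) • β) ω s)

lemma abs_centeredBits_le (ha : a ∈ Set.Icc (0 : ℝ) 1) (ω : Fin N → Bool) (s : Fin N) :
    |centeredBits a ω s| ≤ 1 := by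
  obtain ⟨ha₀, ha₁⟩ := ha
  cases h : ω s <;> simp only [centeredBits, bval, h, if_true, Bool.false_eq_true, if_false,
    abs_le] <;> constructor <;> linarith

lemma mul_one_sub_le_quarter (a : ℝ) : a * (1 - a) ≤ 1 / 4 := by
  linarith [sq_nonneg (a - 1 / 2)]

lemma abs_bval_sub_bval_le (b b' : Bool) : |bval b - bval b'| ≤ 1 := by
  cases b <;> cases b' <;> simp [bval]

lemma centeredBits_update (a : ℝ) (ω : Fin N → Bool) (s : Fin N) (b : Bool) :
    centeredBits a (Function.update ω s b) =
      centeredBits a ω + Pi.single s (bval b - bval (ω s)) := by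
  funext t
  rcases eq_or_ne t s with rfl | hts
  · simp only [centeredBits, Function.update_self, Pi.add_apply, Pi.single_eq_same]
    ring
  · simp [centeredBits, hts]

lemma linearFactor_update (a : ℝ) (α : Fin N → ℝ) (β : Matrix (Fin N) (Fin N) ℝ)
    (ω : Fin N → Bool) (s t : Fin N) (b : Bool) :
    linearFactor a α β (Function.update ω t b) s =
      linearFactor a α β ω s + β s t * (bval b - bval (ω t)) := by
  simp [linearFactor, centeredBits_update, Matrix.mulVec_add, add_assoc]

lemma berExp_quadraticStat (hdiag : ∀ s, β s s = 0) : berExp N a (quadraticStat a α β) = 0 := by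
  have hzero : ∀ s, berExp N a (fun ω ↦ centeredBits a ω s * linearFactor a α β ω s) = 0 := by
    intro s
    rw [berExp_resample s, ← berExp_const (N := N) (a := a) 0]
    congr 1 with ω
    simp only [linearFactor_update, hdiag, centeredBits, Function.update_self, bval, if_true,
      Bool.false_eq_true, if_false]
    ring
  exact (berExp_sum univ _).trans (sum_eq_zero fun s _ ↦ hzero s)

lemma quadraticStat_update (hsymm : β.IsSymm) (hdiag : ∀ s, β s s = 0) (ω : Fin N → Bool)
    (s : Fin N) (b : Bool) :
    quadraticStat a α β (Function.update ω s b) =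
      quadraticStat a α β ω + (bval b - bval (ω s)) * linearFactor a α ((2 : ℝ) • β) ω s := by
  set Δ := bval b - bval (ω s)
  have hcol : centeredBits a ω ⬝ᵥ β.col s = (β *ᵥ centeredBits a ω) s := by
    conv_rhs => rw [← hsymm.eq, Matrix.mulVec_transpose]
    rfl
  have hvec : linearFactor a α β (Function.update ω s b) = linearFactor a α β ω + Δ • β.col s := by
    funext t
    simp [linearFactor_update, mul_comm, Δ]
  have hself : linearFactor a α β (Function.update ω s b) s = linearFactor a α β ω s := by
    simp [linearFactor_update, hdiag]
  rw [quadraticStat, centeredBits_update, add_dotProduct, single_dotProduct, hself, hvec,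
    dotProduct_add, dotProduct_smul, hcol, quadraticStat]
  simp only [linearFactor, Pi.add_apply, Matrix.smul_mulVec, Pi.smul_apply, smul_eq_mul, Δ]
  ring

lemma abs_linearFactor_le (ha : a ∈ Set.Icc (0 : ℝ) 1) (hL : ∀ s, |α s| + ∑ t, |β s t| ≤ L)
    (ω : Fin N → Bool) (s : Fin N) : |linearFactor a α β ω s| ≤ L := by
  calc |linearFactor a α β ω s| = |α s + ∑ t, β s t * centeredBits a ω t| := rfl
    _ ≤ |α s| + ∑ t, |β s t * centeredBits a ω t| :=
        (abs_add_le _ _).trans (add_le_add_right (abs_sum_le_sum_abs _ _) _)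
    _ ≤ |α s| + ∑ t, |β s t| := by
        refine add_le_add_right (sum_le_sum fun t _ ↦ ?_) _
        rw [abs_mul]
        exact mul_le_of_le_one_right (abs_nonneg _) (abs_centeredBits_le ha ω t)
    _ ≤ L := hL s

section RowBound

variable (ha : a ∈ Set.Icc (0 : ℝ) 1) (hL : ∀ s, |α s| + 2 * ∑ t, |β s t| ≤ L)
include ha hL

lemma abs_linearFactor_le_of_two_mul (ω : Fin N → Bool) (s : Fin N) :
    |linearFactor a α β ω s| ≤ L :=
  abs_linearFactor_le ha (fun s ↦ le_trans
    (by linarith [sum_nonneg fun t (_ : t ∈ univ) ↦ abs_nonneg (β s t)]) (hL s)) ω s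

lemma abs_linearFactor_two_smul_le (ω : Fin N → Bool) (s : Fin N) :
    |linearFactor a α ((2 : ℝ) • β) ω s| ≤ L :=
  abs_linearFactor_le ha (fun s ↦ le_of_eq_of_le (by simp [mul_sum, abs_mul]) (hL s)) ω s

lemma abs_linearFactor_mul_update_sub_le (ω : Fin N → Bool) (s t : Fin N) (b : Bool) :
    |linearFactor a α β (Function.update ω t b) s *
        linearFactor a α ((2 : ℝ) • β) (Function.update ω t b) s -
      linearFactor a α β ω s * linearFactor a α ((2 : ℝ) • β) ω s| ≤ 3 * L * |β s t| := by
  set A := linearFactor a α β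
  set D := linearFactor a α ((2 : ℝ) • β)
  set ω' := Function.update ω t b
  set Δ := bval b - bval (ω t)
  have hΔ : |β s t * Δ| ≤ |β s t| := by
    rw [abs_mul]
    exact mul_le_of_le_one_right (abs_nonneg _) (abs_bval_sub_bval_le _ _)
  have hA : A ω' s - A ω s = β s t * Δ := by
    simp only [A, ω', linearFactor_update, add_sub_cancel_left, Δ]
  have hD : D ω' s - D ω s = 2 * (β s t * Δ) := by
    simp only [D, ω', linearFactor_update, add_sub_cancel_left, Matrix.smul_apply, smul_eq_mul,
      mul_assoc, Δ]
  calc |A ω' s * D ω' s - A ω s * D ω s| = |(2 * A ω' s + D ω s) * (β s t * Δ)| := by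
        congr 1
        linear_combination A ω' s * hD + D ω s * hA
    _ ≤ (2 * L + L) * |β s t| := by
        rw [abs_mul]
        refine mul_le_mul ((abs_add_le _ _).trans (add_le_add ?_ ?_)) hΔ (abs_nonneg _) ?_
        · rw [abs_mul, abs_two]
          gcongr
          exact abs_linearFactor_le_of_two_mul ha hL ω' s
        · exact abs_linearFactor_two_smul_le ha hL ω s
        · linarith [(abs_nonneg _).trans (abs_linearFactor_two_smul_le ha hL ω s)]
    _ = 3 * L * |β s t| := by ring

lemma abs_steinCoeff_update_sub_le (hsymm : β.IsSymm) (ω : Fin N → Bool) (t : Fin N) (b : Bool) :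
    |steinCoeff a α β (Function.update ω t b) - steinCoeff a α β ω| ≤ 5 / 2 * L ^ 2 := by
  set ω' := Function.update ω t b with hω'
  set P := fun ω s ↦ linearFactor a α β ω s * linearFactor a α ((2 : ℝ) • β) ω s with hP
  have hL₀ : 0 ≤ L := (abs_nonneg _).trans (abs_linearFactor_le_of_two_mul ha hL ω t)
  have hPL : ∀ s, |P ω s| ≤ L ^ 2 := fun s ↦ by
    rw [hP, abs_mul, sq]
    exact mul_le_mul (abs_linearFactor_le_of_two_mul ha hL ω s)
      (abs_linearFactor_two_smul_le ha hL ω s) (abs_nonneg _) hL₀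
  have hsq : ∀ ω : Fin N → Bool, ∀ s, centeredBits a ω s ^ 2 ≤ 1 := fun ω s ↦
    (sq_le_one_iff_abs_le_one _).2 (abs_centeredBits_le ha ω s)
  have hξ : ∀ s, |centeredBits a ω' s ^ 2 - centeredBits a ω s ^ 2| ≤ if s = t then 1 else 0 := by
    intro s
    split_ifs with hst
    · rw [abs_sub_le_iff]
      constructor <;> linarith [hsq ω s, hsq ω' s, sq_nonneg (centeredBits a ω s),
        sq_nonneg (centeredBits a ω' s)]
    · simp [hω', centeredBits_update, hst]
  calc |steinCoeff a α β ω' - steinCoeff a α β ω|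
      = |∑ s, ((centeredBits a ω' s ^ 2 - centeredBits a ω s ^ 2) * P ω s +
          centeredBits a ω' s ^ 2 * (P ω' s - P ω s))| := by
        simp only [steinCoeff, ← sum_sub_distrib, hP]
        ring_nf
    _ ≤ ∑ s, ((if s = t then 1 else 0) * L ^ 2 + 1 * (3 * L * |β s t|)) := by
        refine (abs_sum_le_sum_abs _ _).trans (sum_le_sum fun s _ ↦ (abs_add_le _ _).trans ?_)
        rw [abs_mul _ (P ω s), abs_mul (_ ^ 2), abs_of_nonneg (sq_nonneg (centeredBits a ω' s))]
        gcongr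
        · exact hξ s
        · exact hPL s
        · exact hsq ω' s
        · exact abs_linearFactor_mul_update_sub_le ha hL ω s t b
    _ = L ^ 2 + 3 * L * ∑ s, |β t s| := by
        simp only [sum_add_distrib, ← sum_mul, sum_ite_eq', mem_univ, if_true, one_mul, ← mul_sum,
          hsymm.apply t]
    _ ≤ 5 / 2 * L ^ 2 := by
        have hrow : ∑ s, |β t s| ≤ L / 2 := by linarith [hL t, abs_nonneg (α t)]
        linear_combination 3 * L * hrow

lemma berExp_abs_steinCoeff_sub_le (hsymm : β.IsSymm) :
    berExp N a (fun ω ↦ |steinCoeff a α β ω - berExp N a (steinCoeff a α β)|) ≤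
      5 / 4 * (√N * L ^ 2) := by
  refine (berExp_abs_sub_berExp_le ha (abs_steinCoeff_update_sub_le ha hL hsymm)).trans
    (Real.sqrt_le_iff.2 ⟨by positivity, ?_⟩)
  calc a * (1 - a) * ∑ _ : Fin N, (5 / 2 * L ^ 2) ^ 2
      ≤ 1 / 4 * ∑ _ : Fin N, (5 / 2 * L ^ 2) ^ 2 := by
        gcongr
        exact mul_one_sub_le_quarter a
    _ = (5 / 4 * (√N * L ^ 2)) ^ 2 := by
        simp only [sum_const, card_univ, Fintype.card_fin, nsmul_eq_mul, mul_pow,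
          Real.sq_sqrt N.cast_nonneg]
        ring

variable (hsymm : β.IsSymm) (hdiag : ∀ s, β s s = 0)
include hsymm hdiag

lemma abs_berExp_quadraticStat_stein_le {F F' : ℝ → ℝ} {C : ℝ≥0}
    (hF : ∀ x y, |F y - F x - F' x * (y - x)| ≤ C * (y - x) ^ 2) :
    |berExp N a (fun ω ↦ quadraticStat a α β ω * F (quadraticStat a α β ω) -
      steinCoeff a α β ω * F' (quadraticStat a α β ω))| ≤ 1 / 4 * (C * (N * L ^ 3)) := by
  have hsum : (fun ω ↦ quadraticStat a α β ω * F (quadraticStat a α β ω) -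
      steinCoeff a α β ω * F' (quadraticStat a α β ω)) =
      fun ω ↦ ∑ s, ((bval (ω s) - a) * (linearFactor a α β ω s * F (quadraticStat a α β ω)) -
        (bval (ω s) - a) ^ 2 * (linearFactor a α β ω s * linearFactor a α ((2 : ℝ) • β) ω s) *
          F' (quadraticStat a α β ω)) := by
    funext ω
    simp only [sum_sub_distrib, ← sum_mul, ← mul_assoc, quadraticStat, steinCoeff, dotProduct,
      centeredBits]
  rw [hsum, berExp_sum]
  calc _ ≤ ∑ _ : Fin N, 1 / 4 * (C * L ^ 3) := by
        refine (abs_sum_le_sum_abs _ _).trans (sum_le_sum fun s _ ↦ ?_)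
        refine (abs_berExp_integration_by_parts_le ha s
          (fun ω b ↦ quadraticStat_update hsymm hdiag ω s b)
          (fun ω b ↦ by simp [linearFactor_update, hdiag])
          (fun ω b ↦ by simp [linearFactor_update, hdiag])
          (fun ω ↦ abs_linearFactor_le_of_two_mul ha hL ω s)
          (fun ω ↦ abs_linearFactor_two_smul_le ha hL ω s) hF).trans ?_
        have hL₀ : 0 ≤ L := (abs_nonneg _).trans
          (abs_linearFactor_le_of_two_mul ha hL (fun _ ↦ true) s)
        gcongr
        exact mul_one_sub_le_quarter a
    _ = 1 / 4 * (C * (N * L ^ 3)) := by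
        simp only [sum_const, card_univ, Fintype.card_fin, nsmul_eq_mul]
        ring

lemma berExp_steinCoeff :
    berExp N a (steinCoeff a α β) = berExp N a (fun ω ↦ quadraticStat a α β ω ^ 2) := by
  have hid := abs_berExp_quadraticStat_stein_le ha hL hsymm hdiag (F := fun x ↦ x)
    (F' := fun _ ↦ 1) (C := 0) (by simp)
  simp only [NNReal.coe_zero, zero_mul, mul_zero, mul_one, abs_nonpos_iff, berExp_sub,
    ← sq, sub_eq_zero] at hid
  exact hid.symm

theorem abs_berExp_quadraticStat_sub_integral_gaussianReal_le {K : ℝ≥0} {h : ℝ → ℝ}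
    (hh : LipschitzWith K h) (hvar : berExp N a (fun ω ↦ quadraticStat a α β ω ^ 2) = 1) :
    |berExp N a (fun ω ↦ h (quadraticStat a α β ω)) -
        ∫ z, h z ∂(ProbabilityTheory.gaussianReal 0 1)| ≤
      K * (10 * (√N * L ^ 2) + 3 * (N * L ^ 3)) := by
  have hremainder := abs_berExp_quadraticStat_stein_le ha hL hsymm hdiag <|
    abs_sub_sub_deriv_mul_le (fun x ↦ (hasDerivAt_steinSolution hh x).differentiableAt)
      (lipschitzWith_deriv_steinSolution hh)
  have hconcentration := berExp_abs_steinCoeff_sub_le ha hL hsymm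
  rw [berExp_steinCoeff ha hL hsymm hdiag, hvar] at hconcentration
  push_cast at hremainder
  linear_combination abs_berExp_sub_integral_gaussianReal_le ha hh (quadraticStat a α β)
    (steinCoeff a α β) + hremainder + 8 * (K : ℝ) * hconcentration

end RowBound
end QuadraticStatistic

section Standardization

variable {N : ℕ} {a : ℝ} {α : Fin N → ℝ} {β : Matrix (Fin N) (Fin N) ℝ} {L : ℝ}

lemma quadraticStat_smul (c : ℝ) (ω : Fin N → Bool) :
    quadraticStat a (c • α) (c • β) ω = c * quadraticStat a α β ω := by
  rw [quadraticStat, linearFactor, Matrix.smul_mulVec, ← smul_add, dotProduct_smul, smul_eq_mul]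
  rfl

theorem abs_berExp_standardized_quadraticStat_sub_integral_gaussianReal_le
    (ha : a ∈ Set.Icc (0 : ℝ) 1) (hL : ∀ s, |α s| + 2 * ∑ t, |β s t| ≤ L) (hsymm : β.IsSymm)
    (hdiag : ∀ s, β s s = 0) {V : ℝ} (hV : 0 < V)
    (hvar : berExp N a (fun ω ↦ quadraticStat a α β ω ^ 2) = V) {K : ℝ≥0} {h : ℝ → ℝ}
    (hh : LipschitzWith K h) :
    |berExp N a (fun ω ↦ h (quadraticStat a α β ω / √V)) -
        ∫ z, h z ∂(ProbabilityTheory.gaussianReal 0 1)| ≤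
      K * (10 * (√N * (L / √V) ^ 2) + 3 * (N * (L / √V) ^ 3)) := by
  set c := (√V)⁻¹ with hc
  have hc₀ : 0 ≤ c := inv_nonneg.2 (Real.sqrt_nonneg V)
  have hscale : ∀ s, |(c • α) s| + 2 * ∑ t, |(c • β) s t| ≤ L / √V := fun s ↦ by
    simp only [Pi.smul_apply, Matrix.smul_apply, smul_eq_mul, abs_mul, abs_of_nonneg hc₀,
      ← mul_sum]
    rw [div_eq_mul_inv]
    linear_combination c * hL s
  have hone : berExp N a (fun ω ↦ quadraticStat a (c • α) (c • β) ω ^ 2) = 1 := by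
    simp only [quadraticStat_smul, mul_pow, berExp_const_mul, hvar]
    rw [hc, inv_pow, Real.sq_sqrt hV.le, inv_mul_cancel₀ hV.ne']
  have hclt := abs_berExp_quadraticStat_sub_integral_gaussianReal_le ha hscale (hsymm.smul c)
    (fun s ↦ by simp [hdiag]) hh hone
  simpa only [quadraticStat_smul, hc, inv_mul_eq_div] using hclt

end Standardization

section Rates

lemma sqrt_mul_sq_div_sqrt {n v : ℝ} (c : ℝ) (hn : 0 < n) (hv : 0 < v) :
    √n * (c / n / √v) ^ 2 = c ^ 2 * (1 / (v * n * √n)) := by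
  rw [div_pow, Real.sq_sqrt hv.le]
  field_simp
  rw [Real.sq_sqrt hn.le, mul_comm]

lemma mul_cube_div_sqrt {n v : ℝ} (c : ℝ) (hn : 0 < n) (hv : 0 < v) :
    n * (c / n / √v) ^ 3 = c ^ 3 * (1 / (v * √v * n ^ 2)) := by
  rw [div_pow, pow_succ √v, Real.sq_sqrt hv.le]
  field_simp

lemma one_div_add_one_div_le_div_sqrt {c n v : ℝ} (hc : 0 < c) (hn : 0 < n) (hcv : c ≤ n * v) :
    1 / (v * n * √n) + 1 / (v * √v * n ^ 2) ≤ (c⁻¹ + (c * √c)⁻¹) / √n := by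
  have hcube : v * √v * n ^ 2 = n * v * √(n * v) * √n := by
    rw [Real.sqrt_mul hn.le]
    linear_combination (-(v * √v * n)) * Real.mul_self_sqrt hn.le
  calc 1 / (v * n * √n) + 1 / (v * √v * n ^ 2)
      = ((n * v)⁻¹ + (n * v * √(n * v))⁻¹) / √n := by
        rw [hcube, mul_comm v n, add_div, one_div, one_div, mul_inv _ √n, mul_inv _ √n,
          div_eq_mul_inv, div_eq_mul_inv]
    _ ≤ (c⁻¹ + (c * √c)⁻¹) / √n := by
        have hnv : 0 ≤ n * v := hc.le.trans hcv
        gcongr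

end Rates

section KernelStatistic

open scoped Matrix

/-- The weights `1 - l_s(0,1)` through which `Tstat` depends on the kernels. -/
def kernelGap {N : ℕ} (l : Fin N → Bool → Bool → ℝ) : Fin N → ℝ := fun s ↦ 1 - l s false true

/-- The matrix `w wᵀ` with its diagonal removed, which encodes the sum over `s ≠ s'` in `Tstat`. -/
def offDiagonal {N : ℕ} (w : Fin N → ℝ) : Matrix (Fin N) (Fin N) ℝ :=
  Matrix.of fun s t ↦ if s ≠ t then w s * w t else 0

/-- The linear coefficients of `Tstat - E Tstat` in the centred bits, for `w = kernelGap l`. -/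
noncomputable def gKSSLinear {N : ℕ} (a : ℝ) (w : Fin N → ℝ) : Fin N → ℝ :=
  ((N : ℝ) ^ 2)⁻¹ • ((2 * (1 - 2 * a)) • w +
    (4 * (a * (1 - a)) * (1 - 2 * a)) • (offDiagonal w *ᵥ 1))

/-- The quadratic coefficients of `Tstat - E Tstat` in the centred bits, for `w = kernelGap l`. -/
noncomputable def gKSSQuadratic {N : ℕ} (a : ℝ) (w : Fin N → ℝ) : Matrix (Fin N) (Fin N) ℝ :=
  (((N : ℝ) ^ 2)⁻¹ * (1 - 2 * a) ^ 2) • offDiagonal w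

variable {N : ℕ} {a : ℝ} {w : Fin N → ℝ} {l : Fin N → Bool → Bool → ℝ}

lemma offDiagonal_isSymm (w : Fin N → ℝ) : (offDiagonal w).IsSymm :=
  Matrix.IsSymm.ext fun s t ↦ by simp [offDiagonal, eq_comm, mul_comm]

lemma gKSSQuadratic_isSymm (a : ℝ) (w : Fin N → ℝ) : (gKSSQuadratic a w).IsSymm :=
  (offDiagonal_isSymm w).smul _

lemma gKSSQuadratic_self (a : ℝ) (w : Fin N → ℝ) (s : Fin N) : gKSSQuadratic a w s s = 0 := by
  simp [gKSSQuadratic, offDiagonal]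

lemma sum_abs_offDiagonal_le (hw : ∀ s, |w s| ≤ 2) (s : Fin N) :
    ∑ t, |offDiagonal w s t| ≤ 4 * N := by
  have hentry : ∀ t, |offDiagonal w s t| ≤ 4 := fun t ↦ by
    simp only [offDiagonal, Matrix.of_apply]
    split_ifs
    · rw [abs_mul]
      linarith [mul_le_mul (hw s) (hw t) (abs_nonneg _) zero_le_two]
    · simp
  exact (sum_le_card_nsmul univ _ 4 fun t _ ↦ hentry t).trans_eq (by simp [mul_comm])

lemma abs_gKSSLinear_add_le (hN : 1 ≤ N) (ha : a ∈ Set.Icc (0 : ℝ) 1) (hw : ∀ s, |w s| ≤ 2)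
    (s : Fin N) : |gKSSLinear a w s| + 2 * ∑ t, |gKSSQuadratic a w s t| ≤ 16 / N := by
  have hN' : (1 : ℝ) ≤ N := by exact_mod_cast hN
  have hκ : |1 - 2 * a| ≤ 1 := abs_le.2 ⟨by linarith [ha.2], by linarith [ha.1]⟩
  have hv : |4 * (a * (1 - a))| ≤ 1 := by
    rw [abs_of_nonneg (by nlinarith [ha.1, ha.2])]
    linarith [mul_one_sub_le_quarter a]
  have hrow := sum_abs_offDiagonal_le hw s
  have hrowSum : |(offDiagonal w *ᵥ 1) s| ≤ 4 * N := by
    rw [Matrix.mulVec, dotProduct_one]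
    exact (abs_sum_le_sum_abs _ _).trans hrow
  have hlin : |gKSSLinear a w s| ≤ ((N : ℝ) ^ 2)⁻¹ * (2 * 1 * 2 + 1 * 1 * (4 * N)) := by
    simp only [gKSSLinear, Pi.smul_apply, Pi.add_apply, smul_eq_mul]
    rw [abs_mul, abs_of_nonneg (by positivity : (0 : ℝ) ≤ ((N : ℝ) ^ 2)⁻¹)]
    gcongr
    refine (abs_add_le _ _).trans ?_
    rw [abs_mul, abs_mul, abs_mul, abs_mul (4 * _), abs_two]
    gcongr
    exact hw s
  have hquad : ∑ t, |gKSSQuadratic a w s t| ≤ ((N : ℝ) ^ 2)⁻¹ * 1 ^ 2 * (4 * N) := by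
    simp only [gKSSQuadratic, Matrix.smul_apply, smul_eq_mul]
    simp only [abs_mul _ (offDiagonal w s _), ← mul_sum]
    rw [abs_mul, abs_pow, abs_of_nonneg (by positivity : (0 : ℝ) ≤ ((N : ℝ) ^ 2)⁻¹)]
    gcongr
  calc _ ≤ ((N : ℝ) ^ 2)⁻¹ * (12 * N + 4 * 1) := by linear_combination hlin + 2 * hquad
    _ ≤ ((N : ℝ) ^ 2)⁻¹ * (12 * N + 4 * N) := by gcongr
    _ = 16 / N := by
      field_simp
      norm_num

lemma sub_bval_sq (a : ℝ) (ω : Fin N → Bool) (s : Fin N) :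
    (a - bval (ω s)) ^ 2 = a * (1 - a) + (1 - 2 * a) * centeredBits a ω s := by
  cases h : ω s <;> simp [centeredBits, bval, h] <;> ring

section Normalized

variable (hsymm : ∀ s b b', l s b b' = l s b' b) (h₀ : ∀ s, l s false false = 1)
  (h₁ : ∀ s, l s true true = 1)
include hsymm h₀ h₁

lemma sub_bval_mul_kernel_sub (a : ℝ) (ω : Fin N → Bool) (s : Fin N) :
    (a - bval (ω s)) * (l s true (ω s) - l s false (ω s)) =
      -(kernelGap l s * (2 * (a * (1 - a)) + (1 - 2 * a) * centeredBits a ω s)) := by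
  cases h : ω s <;> simp [centeredBits, bval, h, kernelGap, h₀, h₁, hsymm s true false] <;> ring

lemma Tstat_eq_dotProduct (a : ℝ) (ω : Fin N → Bool) :
    Tstat N a l ω = ((N : ℝ) ^ 2)⁻¹ *
      (((2 * (a * (1 - a))) • 1 + (1 - 2 * a) • centeredBits a ω) ⬝ᵥ offDiagonal (kernelGap l) *ᵥ
          ((2 * (a * (1 - a))) • 1 + (1 - 2 * a) • centeredBits a ω) +
        ((a * (1 - a)) • 1 + (1 - 2 * a) • centeredBits a ω) ⬝ᵥ (2 : ℝ) • kernelGap l) := by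
  simp only [Tstat, dotProduct, Matrix.mulVec, Pi.add_apply, Pi.smul_apply, Pi.one_apply,
    smul_eq_mul, mul_one, sub_bval_sq, mul_sum]
  congr 2
  · refine sum_congr rfl fun s _ ↦ sum_congr rfl fun t _ ↦ ?_
    simp only [offDiagonal, Matrix.of_apply]
    split_ifs
    · linear_combination
        (a - bval (ω t)) * (l t true (ω t) - l t false (ω t)) *
          sub_bval_mul_kernel_sub hsymm h₀ h₁ a ω s -
        kernelGap l s * (2 * (a * (1 - a)) + (1 - 2 * a) * centeredBits a ω s) *
          sub_bval_mul_kernel_sub hsymm h₀ h₁ a ω t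
    · ring
  · exact sum_congr rfl fun s _ ↦ by simp only [kernelGap]; ring

lemma exists_Tstat_eq_add_quadraticStat (a : ℝ) :
    ∃ c, ∀ ω, Tstat N a l ω =
      c + quadraticStat a (gKSSLinear a (kernelGap l)) (gKSSQuadratic a (kernelGap l)) ω := by
  refine ⟨((N : ℝ) ^ 2)⁻¹ * ((2 * (a * (1 - a))) ^ 2 * (1 ⬝ᵥ offDiagonal (kernelGap l) *ᵥ 1) +
    2 * (a * (1 - a)) * (1 ⬝ᵥ kernelGap l)), fun ω ↦ ?_⟩
  have hcross : 1 ⬝ᵥ offDiagonal (kernelGap l) *ᵥ centeredBits a ω =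
      centeredBits a ω ⬝ᵥ offDiagonal (kernelGap l) *ᵥ 1 := by
    rw [dotProduct_comm, ← Matrix.vecMul_transpose, offDiagonal_isSymm,
      ← Matrix.dotProduct_mulVec]
  rw [Tstat_eq_dotProduct hsymm h₀ h₁, quadraticStat, linearFactor, gKSSLinear, gKSSQuadratic]
  simp only [Matrix.mulVec_add, Matrix.mulVec_smul, Matrix.smul_mulVec, dotProduct_add,
    add_dotProduct, dotProduct_smul, smul_dotProduct, smul_eq_mul, hcross]
  ring

lemma Tstat_sub_berExp (a : ℝ) (ω : Fin N → Bool) :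
    Tstat N a l ω - berExp N a (Tstat N a l) =
      quadraticStat a (gKSSLinear a (kernelGap l)) (gKSSQuadratic a (kernelGap l)) ω := by
  obtain ⟨c, hc⟩ := exists_Tstat_eq_add_quadraticStat hsymm h₀ h₁ a
  rw [funext hc, berExp_add, berExp_const, berExp_quadraticStat (gKSSQuadratic_self a _), add_zero,
    add_sub_cancel_left]

theorem abs_berExp_Wstat_sub_integral_gaussianReal_le (hN : 1 ≤ N) (ha : a ∈ Set.Icc (0 : ℝ) 1)
    (hl : ∀ s, |l s false true| ≤ 1) (hvar : 0 < varT N a l) {K : ℝ≥0} {f : ℝ → ℝ}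
    (hf : LipschitzWith K f) :
    |berExp N a (fun ω ↦ f (Wstat N a l ω)) -
        ∫ z, f z ∂(ProbabilityTheory.gaussianReal 0 1)| ≤
      12288 * K * (1 / (varT N a l * N * √N) + 1 / (varT N a l * √(varT N a l) * N ^ 2)) := by
  have hgap : ∀ s, |kernelGap l s| ≤ 2 := fun s ↦
    (abs_sub 1 _).trans (by linarith [hl s, abs_one (α := ℝ)])
  have hquad := Tstat_sub_berExp hsymm h₀ h₁ a
  have hvar_eq : varT N a l = berExp N a (fun ω ↦
      quadraticStat a (gKSSLinear a (kernelGap l)) (gKSSQuadratic a (kernelGap l)) ω ^ 2) := by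
    simp only [varT, ← berExp_sub_berExp_sq, hquad]
  have hclt := abs_berExp_standardized_quadraticStat_sub_integral_gaussianReal_le ha
    (abs_gKSSLinear_add_le hN ha hgap) (gKSSQuadratic_isSymm a _) (gKSSQuadratic_self a _)
    hvar hvar_eq.symm hf
  simp only [← hquad] at hclt
  have hN' : (0 : ℝ) < N := by exact_mod_cast hN
  refine hclt.trans ?_
  rw [sqrt_mul_sq_div_sqrt 16 hN' hvar, mul_cube_div_sqrt 16 hN' hvar]
  have hfirst : 0 ≤ 1 / (varT N a l * N * √N) := by positivity
  linear_combination 9728 * (K : ℝ) * hfirst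

end Normalized
end KernelStatistic

/-- Theorem 2, normal approximation of gKSS² under the Bernoulli null:
there is an absolute constant `C > 0` such that for every `N ≥ 1`, `a* ∈ [0,1]` and
symmetric kernels `l_s` with `l_s(0,0) = l_s(1,1) = 1`, `|l_s(0,1)| ≤ 1`, if
`σ² = Var(T) > 0` and `W = (T − E[T])/σ` then the Wasserstein distance between `W` and a
standard normal `Z` is at most `C(1/(σ²N^{3/2}) + 1/(σ³N²))`; in particular, if
`N σ² ≥ c₀ > 0` it is at most `C(c₀⁻¹ + c₀^{−3/2})/√N`. -/
theorem gKSS_sq_normal_approximation :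
    ∃ C : ℝ, 0 < C ∧
      ∀ (N : ℕ), 1 ≤ N → ∀ a : ℝ, a ∈ Set.Icc (0 : ℝ) 1 →
        ∀ l : Fin N → Bool → Bool → ℝ,
          (∀ (s : Fin N) (b b' : Bool), l s b b' = l s b' b) →
          (∀ s : Fin N, l s false false = 1) → (∀ s : Fin N, l s true true = 1) →
          (∀ s : Fin N, |l s false true| ≤ 1) →
          0 < varT N a l →
          (∀ f : ℝ → ℝ, LipschitzWith 1 f →
            |berExp N a (fun ω => f (Wstat N a l ω)) -
                ∫ z, f z ∂(ProbabilityTheory.gaussianReal 0 1)| ≤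
              C * (1 / (varT N a l * (N : ℝ) * Real.sqrt (N : ℝ)) +
                1 / (varT N a l * Real.sqrt (varT N a l) * ((N : ℝ)) ^ 2))) ∧
          ∀ c₀ : ℝ, 0 < c₀ → c₀ ≤ (N : ℝ) * varT N a l →
            ∀ f : ℝ → ℝ, LipschitzWith 1 f →
              |berExp N a (fun ω => f (Wstat N a l ω)) -
                  ∫ z, f z ∂(ProbabilityTheory.gaussianReal 0 1)| ≤
                C * (c₀⁻¹ + (c₀ * Real.sqrt c₀)⁻¹) / Real.sqrt (N : ℝ) := by
  refine ⟨12288, by norm_num, ?_⟩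
  intro N hN a ha l hsymm h₀ h₁ hl hvar
  have hbound (f : ℝ → ℝ) (hf : LipschitzWith 1 f) := by
    simpa only [NNReal.coe_one, mul_one] using
      abs_berExp_Wstat_sub_integral_gaussianReal_le hsymm h₀ h₁ hN ha hl hvar hf
  refine ⟨hbound, fun c₀ hc₀ hc₀N f hf ↦ (hbound f hf).trans ?_⟩
  rw [mul_div_assoc]
  gcongr
  exact one_div_add_one_div_le_div_sqrt hc₀ (by exact_mod_cast hN) hc₀N
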